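/- Let 0 → C →f E →g M → 0 be a non-abelian extension of λ-weighted Rota-Baxter Lie coalgebras with retraction t and induced non-abelian 2-cocycle (h, ρ, φ). Let Ker K = {γ ∈ Aut(E) : tγf = I_C and gγ = g}. Then the map χ : Ker K → Z¹_nab(M,C) given by χ(γ) = s_γ, where s_γ(g(e)) = tγ(e) − t(e), is a well-defined bijective group homomorphism (χ(γ₁γ₂) = χ(γ₁) + χ(γ₂)); hence Ker K ≅ Z¹_nab(M,C), where Z¹_nab(M,C) = {s : M → C linear : (s⊗I)ρ − τ(s⊗I)ρ = Δ_C s − (s⊗s)Δ_M, (I⊗s)Δ_M = 0, and sR_M = R_C s}. -/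

import Mathlib

open TensorProduct LinearMap

section

variable {k : Type*} [Field k]
variable {C : Type*} [AddCommGroup C] [Module k C]
variable {M : Type*} [AddCommGroup M] [Module k M]
variable {E : Type*} [AddCommGroup E] [Module k E]

/-- Co-antisymmetry of a cobracket: `Δ = -τΔ`. -/
def CoAnti (Δ : C →ₗ[k] C ⊗[k] C) : Prop :=
  Δ = -((TensorProduct.comm k C C).toLinearMap ∘ₗ Δ)

/-- The co-Jacobi identity `(I⊗Δ)Δ - (Δ⊗I)Δ + (I⊗τ)(Δ⊗I)Δ = 0`. -/
def CoJacobi (Δ : C →ₗ[k] C ⊗[k] C) : Prop :=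
  lTensor C Δ ∘ₗ Δ
    - (TensorProduct.assoc k C C C).toLinearMap ∘ₗ rTensor C Δ ∘ₗ Δ
    + lTensor C (TensorProduct.comm k C C).toLinearMap ∘ₗ
        (TensorProduct.assoc k C C C).toLinearMap ∘ₗ rTensor C Δ ∘ₗ Δ = 0

/-- `(R⊗R)Δ = (I⊗R + R⊗I + λI) Δ R`. -/
def IsRBO (lam : k) (Δ : C →ₗ[k] C ⊗[k] C) (R : C →ₗ[k] C) : Prop :=
  TensorProduct.map R R ∘ₗ Δ
    = (lTensor C R + rTensor C R + lam • (LinearMap.id : C ⊗[k] C →ₗ[k] C ⊗[k] C)) ∘ₗ Δ ∘ₗ R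

/-- `λ`-weighted Rota-Baxter Lie coalgebra. -/
def IsRBLC (lam : k) (Δ : C →ₗ[k] C ⊗[k] C) (R : C →ₗ[k] C) : Prop :=
  CoAnti Δ ∧ CoJacobi Δ ∧ IsRBO lam Δ R

/-- Homomorphism of `λ`-weighted Rota-Baxter Lie coalgebras:
`(θ⊗θ)Δ_C = Δ_E θ` and `R_E θ = θ R_C`. -/
def IsHom (ΔC : C →ₗ[k] C ⊗[k] C) (RC : C →ₗ[k] C)
    (ΔE : E →ₗ[k] E ⊗[k] E) (RE : E →ₗ[k] E) (θ : C →ₗ[k] E) : Prop :=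
  TensorProduct.map θ θ ∘ₗ ΔC = ΔE ∘ₗ θ ∧ RE ∘ₗ θ = θ ∘ₗ RC

/-- Non-abelian 2-cocycle `(h, ρ, φ)` on `(C, Δ_C, R_C)` with values in `(M, Δ_M, R_M)`. -/
def NA2Cocycle (lam : k) (ΔC : C →ₗ[k] C ⊗[k] C) (RC : C →ₗ[k] C)
    (ΔM : M →ₗ[k] M ⊗[k] M) (RM : M →ₗ[k] M)
    (h : M →ₗ[k] C ⊗[k] C) (ρ : M →ₗ[k] M ⊗[k] C) (φ : M →ₗ[k] C) : Prop :=
  -- (1)  τh + h = 0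
  ((TensorProduct.comm k C C).toLinearMap ∘ₗ h + h = 0) ∧
  -- (2)  (I⊗Δ_C)h − (Δ_C⊗I)h + (I⊗τ)(Δ_C⊗I)h = (h⊗I)ρ + (I⊗h)τρ − (I⊗τ)(h⊗I)ρ
  (lTensor C ΔC ∘ₗ h
      - (TensorProduct.assoc k C C C).toLinearMap ∘ₗ rTensor C ΔC ∘ₗ h
      + lTensor C (TensorProduct.comm k C C).toLinearMap ∘ₗ
          (TensorProduct.assoc k C C C).toLinearMap ∘ₗ rTensor C ΔC ∘ₗ h
    = (TensorProduct.assoc k C C C).toLinearMap ∘ₗ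
        TensorProduct.map h (LinearMap.id : C →ₗ[k] C) ∘ₗ ρ
      + lTensor C h ∘ₗ (TensorProduct.comm k M C).toLinearMap ∘ₗ ρ
      - lTensor C (TensorProduct.comm k C C).toLinearMap ∘ₗ
          (TensorProduct.assoc k C C C).toLinearMap ∘ₗ
          TensorProduct.map h (LinearMap.id : C →ₗ[k] C) ∘ₗ ρ) ∧
  -- (3)  (I⊗Δ_C)ρ + (I⊗h)Δ_M = (ρ⊗I)ρ − (I⊗τ)(ρ⊗I)ρ
  (lTensor M ΔC ∘ₗ ρ + lTensor M h ∘ₗ ΔM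
    = (TensorProduct.assoc k M C C).toLinearMap ∘ₗ rTensor C ρ ∘ₗ ρ
      - lTensor M (TensorProduct.comm k C C).toLinearMap ∘ₗ
          (TensorProduct.assoc k M C C).toLinearMap ∘ₗ rTensor C ρ ∘ₗ ρ) ∧
  -- (4)  (Δ_M⊗I)ρ = (I⊗τ)(ρ⊗I)Δ_M + (I⊗ρ)Δ_M
  ((TensorProduct.assoc k M M C).toLinearMap ∘ₗ rTensor C ΔM ∘ₗ ρ
    = lTensor M (TensorProduct.comm k C M).toLinearMap ∘ₗ
        (TensorProduct.assoc k M C M).toLinearMap ∘ₗ rTensor M ρ ∘ₗ ΔM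
      + lTensor M ρ ∘ₗ ΔM) ∧
  -- (5)
  (TensorProduct.map φ RC ∘ₗ ρ
      - TensorProduct.map RC φ ∘ₗ (TensorProduct.comm k M C).toLinearMap ∘ₗ ρ
      - TensorProduct.map φ (LinearMap.id : C →ₗ[k] C) ∘ₗ ρ ∘ₗ RM
      + lTensor C φ ∘ₗ (TensorProduct.comm k M C).toLinearMap ∘ₗ ρ ∘ₗ RM
      + TensorProduct.map φ φ ∘ₗ ΔM
      - (lTensor C RC + rTensor C RC
          + lam • (LinearMap.id : C ⊗[k] C →ₗ[k] C ⊗[k] C)) ∘ₗ ΔC ∘ₗ φ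
    = (rTensor C RC + lTensor C RC
        + lam • (LinearMap.id : C ⊗[k] C →ₗ[k] C ⊗[k] C)) ∘ₗ h ∘ₗ RM
      - TensorProduct.map RC RC ∘ₗ h) ∧
  -- (6)  (R_M⊗φ)Δ_M + (R_M⊗R_C)ρ = (I⊗φ)Δ_M R_M + (I⊗R_C + R_M⊗I + λ)ρR_M
  (TensorProduct.map RM φ ∘ₗ ΔM + TensorProduct.map RM RC ∘ₗ ρ
    = lTensor M φ ∘ₗ ΔM ∘ₗ RM
      + (lTensor M RC + rTensor C RM
          + lam • (LinearMap.id : M ⊗[k] C →ₗ[k] M ⊗[k] C)) ∘ₗ ρ ∘ₗ RM)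

/-- The cobracket `Δ_{(h,ρ)}` on `C ⊕ M`. -/
noncomputable def prodCobra (ΔC : C →ₗ[k] C ⊗[k] C) (ΔM : M →ₗ[k] M ⊗[k] M)
    (h : M →ₗ[k] C ⊗[k] C) (ρ : M →ₗ[k] M ⊗[k] C) :
    (C × M) →ₗ[k] (C × M) ⊗[k] (C × M) :=
  TensorProduct.map (LinearMap.inl k C M) (LinearMap.inl k C M) ∘ₗ
      (ΔC ∘ₗ LinearMap.fst k C M + h ∘ₗ LinearMap.snd k C M)
    + TensorProduct.map (LinearMap.inr k C M) (LinearMap.inr k C M) ∘ₗ ΔM ∘ₗ LinearMap.snd k C M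
    + TensorProduct.map (LinearMap.inr k C M) (LinearMap.inl k C M) ∘ₗ ρ ∘ₗ LinearMap.snd k C M
    - TensorProduct.map (LinearMap.inl k C M) (LinearMap.inr k C M) ∘ₗ
        (TensorProduct.comm k M C).toLinearMap ∘ₗ ρ ∘ₗ LinearMap.snd k C M

/-- The operator `R_φ` on `C ⊕ M`. -/
def prodRB (RC : C →ₗ[k] C) (RM : M →ₗ[k] M) (φ : M →ₗ[k] C) :
    (C × M) →ₗ[k] (C × M) :=
  LinearMap.inl k C M ∘ₗ (RC ∘ₗ LinearMap.fst k C M + φ ∘ₗ LinearMap.snd k C M)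
    + LinearMap.inr k C M ∘ₗ RM ∘ₗ LinearMap.snd k C M

/-- `(α,β)` is extensible with respect to the non-abelian extension
`0 → C →f E →g M → 0`. -/
def Extensible (ΔE : E →ₗ[k] E ⊗[k] E) (RE : E →ₗ[k] E)
    (f : C →ₗ[k] E) (g : E →ₗ[k] M) (α : C →ₗ[k] C) (β : M →ₗ[k] M) : Prop :=
  ∃ γ : E →ₗ[k] E, IsHom ΔE RE ΔE RE γ ∧ Function.Bijective γ ∧
    Submodule.map γ (LinearMap.range f) = LinearMap.range f ∧
    γ ∘ₗ f = f ∘ₗ α ∧ g ∘ₗ γ = β ∘ₗ g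

/-- `(h', ρ', φ')` differs from `(h, ρ, φ)` by the equivalence move associated to
the linear map `s : M → C`. -/
def EquivVia (ΔC : C →ₗ[k] C ⊗[k] C) (RC : C →ₗ[k] C)
    (ΔM : M →ₗ[k] M ⊗[k] M) (RM : M →ₗ[k] M) (s : M →ₗ[k] C)
    (h : M →ₗ[k] C ⊗[k] C) (ρ : M →ₗ[k] M ⊗[k] C) (φ : M →ₗ[k] C)
    (h' : M →ₗ[k] C ⊗[k] C) (ρ' : M →ₗ[k] M ⊗[k] C) (φ' : M →ₗ[k] C) : Prop :=
  h' - h = TensorProduct.map s (LinearMap.id : C →ₗ[k] C) ∘ₗ ρ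
      - (TensorProduct.comm k C C).toLinearMap ∘ₗ
          TensorProduct.map s (LinearMap.id : C →ₗ[k] C) ∘ₗ ρ
      + TensorProduct.map s s ∘ₗ ΔM - ΔC ∘ₗ s ∧
  ρ' - ρ = lTensor M s ∘ₗ ΔM ∧
  φ' - φ = s ∘ₗ RM - RC ∘ₗ s

/-- Two non-abelian 2-cocycles are equivalent. -/
def CocEquiv (ΔC : C →ₗ[k] C ⊗[k] C) (RC : C →ₗ[k] C)
    (ΔM : M →ₗ[k] M ⊗[k] M) (RM : M →ₗ[k] M)
    (h : M →ₗ[k] C ⊗[k] C) (ρ : M →ₗ[k] M ⊗[k] C) (φ : M →ₗ[k] C)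
    (h' : M →ₗ[k] C ⊗[k] C) (ρ' : M →ₗ[k] M ⊗[k] C) (φ' : M →ₗ[k] C) : Prop :=
  ∃ s : M →ₗ[k] C, EquivVia ΔC RC ΔM RM s h ρ φ h' ρ' φ'


/-- Membership in the group `Z¹_nab(M,C)` of non-abelian 1-cocycles. -/
def IsNA1Cocycle (ΔC : C →ₗ[k] C ⊗[k] C) (RC : C →ₗ[k] C)
    (ΔM : M →ₗ[k] M ⊗[k] M) (RM : M →ₗ[k] M)
    (ρ : M →ₗ[k] M ⊗[k] C) (s : M →ₗ[k] C) : Prop :=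
  (TensorProduct.map s (LinearMap.id : C →ₗ[k] C) ∘ₗ ρ
      - (TensorProduct.comm k C C).toLinearMap ∘ₗ
          TensorProduct.map s (LinearMap.id : C →ₗ[k] C) ∘ₗ ρ
    = ΔC ∘ₗ s - TensorProduct.map s s ∘ₗ ΔM) ∧
  lTensor M s ∘ₗ ΔM = 0 ∧
  s ∘ₗ RM = RC ∘ₗ s

/-- Membership in `Ker K ⊆ Aut(E)`. -/
def InKerK (ΔE : E →ₗ[k] E ⊗[k] E) (RE : E →ₗ[k] E)
    (f : C →ₗ[k] E) (g : E →ₗ[k] M) (t : E →ₗ[k] C) (γ : E →ₗ[k] E) : Prop :=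
  IsHom ΔE RE ΔE RE γ ∧ Function.Bijective γ ∧
    t ∘ₗ γ ∘ₗ f = LinearMap.id ∧ g ∘ₗ γ = g

theorem aux_mapmap {A B D A' B' D' : Type*} [AddCommGroup A] [Module k A] [AddCommGroup B]
    [Module k B] [AddCommGroup D] [Module k D] [AddCommGroup A'] [Module k A'] [AddCommGroup B']
    [Module k B'] [AddCommGroup D'] [Module k D'] (a : A →ₗ[k] B) (b : B →ₗ[k] D)
    (a' : A' →ₗ[k] B') (b' : B' →ₗ[k] D') (x : A ⊗[k] A') :
    TensorProduct.map (b ∘ₗ a) (b' ∘ₗ a') x = TensorProduct.map b b' (TensorProduct.map a a' x) := by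
  rw [TensorProduct.map_comp]; rfl

theorem aux_anti {A B : Type*} [AddCommGroup A] [Module k A] [AddCommGroup B] [Module k B]
    (Δ : E →ₗ[k] E ⊗[k] E) (hΔ : CoAnti Δ) (a : E →ₗ[k] A) (b : E →ₗ[k] B) (e : E) :
    TensorProduct.map a b (Δ e) = - TensorProduct.comm k B A (TensorProduct.map b a (Δ e)) := by
  have h1 : Δ e = -(TensorProduct.comm k E E (Δ e)) := LinearMap.congr_fun hΔ e
  conv_lhs => rw [h1]
  rw [map_neg, TensorProduct.map_comm]

theorem aux_joint (f : C →ₗ[k] E) (g : E →ₗ[k] M) (t : E →ₗ[k] C) (σ : M →ₗ[k] E)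
    (hσ : f ∘ₗ t + σ ∘ₗ g = LinearMap.id) (x y : E ⊗[k] E)
    (h1 : TensorProduct.map t t x = TensorProduct.map t t y)
    (h2 : TensorProduct.map g t x = TensorProduct.map g t y)
    (h3 : TensorProduct.map t g x = TensorProduct.map t g y)
    (h4 : TensorProduct.map g g x = TensorProduct.map g g y) : x = y := by
  have key : ∀ z : E ⊗[k] E, z = TensorProduct.map f f (TensorProduct.map t t z)
      + TensorProduct.map f σ (TensorProduct.map t g z)
      + (TensorProduct.map σ f (TensorProduct.map g t z)
      + TensorProduct.map σ σ (TensorProduct.map g g z)) := by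
    intro z
    simp only [← aux_mapmap]
    have : z = TensorProduct.map (f ∘ₗ t + σ ∘ₗ g) (f ∘ₗ t + σ ∘ₗ g) z := by
      rw [hσ, TensorProduct.map_id]; rfl
    conv_lhs => rw [this]
    simp only [TensorProduct.map_add_left, TensorProduct.map_add_right, LinearMap.add_apply]
    abel
  rw [key x, key y, h1, h2, h3, h4]

theorem stmt17 (lam : k) (ΔC : C →ₗ[k] C ⊗[k] C) (RC : C →ₗ[k] C)
    (ΔM : M →ₗ[k] M ⊗[k] M) (RM : M →ₗ[k] M)
    (ΔE : E →ₗ[k] E ⊗[k] E) (RE : E →ₗ[k] E)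
    (hC : IsRBLC lam ΔC RC) (hM : IsRBLC lam ΔM RM) (hE : IsRBLC lam ΔE RE)
    (f : C →ₗ[k] E) (g : E →ₗ[k] M)
    (homf : IsHom ΔC RC ΔE RE f) (homg : IsHom ΔE RE ΔM RM g)
    (injf : Function.Injective f) (surjg : Function.Surjective g)
    (hexact : LinearMap.range f = LinearMap.ker g)
    (t : E →ₗ[k] C) (ht : t ∘ₗ f = LinearMap.id)
    (h : M →ₗ[k] C ⊗[k] C) (ρ : M →ₗ[k] M ⊗[k] C) (φ : M →ₗ[k] C)
    (hh : h ∘ₗ g = TensorProduct.map t t ∘ₗ ΔE - ΔC ∘ₗ t)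
    (hρ : ρ ∘ₗ g = TensorProduct.map g t ∘ₗ ΔE)
    (hφ : φ ∘ₗ g = t ∘ₗ RE - RC ∘ₗ t) :
    -- `s_γ(g(e)) = tγ(e) − t(e)` is well defined ...
    (∀ γ : E →ₗ[k] E, InKerK ΔE RE f g t γ →
      ∀ e e' : E, g e = g e' → t (γ e) - t e = t (γ e') - t e') ∧
    -- ... and exists as a linear map:
    (∀ γ : E →ₗ[k] E, InKerK ΔE RE f g t γ →
      ∃! s : M →ₗ[k] C, s ∘ₗ g = t ∘ₗ γ - t) ∧
    -- `χ` takes values in `Z¹_nab(M,C)`: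
    (∀ γ : E →ₗ[k] E, InKerK ΔE RE f g t γ →
      ∀ s : M →ₗ[k] C, s ∘ₗ g = t ∘ₗ γ - t →
        IsNA1Cocycle ΔC RC ΔM RM ρ s) ∧
    -- `χ` is a group homomorphism: `χ(γ₁γ₂) = χ(γ₁) + χ(γ₂)`:
    (∀ γ₁ γ₂ : E →ₗ[k] E, InKerK ΔE RE f g t γ₁ → InKerK ΔE RE f g t γ₂ →
      ∀ s₁ s₂ s₁₂ : M →ₗ[k] C,
        s₁ ∘ₗ g = t ∘ₗ γ₁ - t → s₂ ∘ₗ g = t ∘ₗ γ₂ - t →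
        s₁₂ ∘ₗ g = t ∘ₗ (γ₁ ∘ₗ γ₂) - t → s₁₂ = s₁ + s₂) ∧
    -- `χ` is injective:
    (∀ γ₁ γ₂ : E →ₗ[k] E, InKerK ΔE RE f g t γ₁ → InKerK ΔE RE f g t γ₂ →
      ∀ s : M →ₗ[k] C, s ∘ₗ g = t ∘ₗ γ₁ - t → s ∘ₗ g = t ∘ₗ γ₂ - t → γ₁ = γ₂) ∧
    -- `χ` is surjective:
    (∀ s : M →ₗ[k] C, IsNA1Cocycle ΔC RC ΔM RM ρ s →
      ∃ γ : E →ₗ[k] E, InKerK ΔE RE f g t γ ∧ s ∘ₗ g = t ∘ₗ γ - t) := by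
  have gf : ∀ c, g (f c) = 0 := fun c => by
    have : f c ∈ LinearMap.ker g := hexact ▸ LinearMap.mem_range_self f c
    simpa using this
  have tf : ∀ c, t (f c) = c := fun c => LinearMap.congr_fun ht c
  have ker : ∀ e, g e = 0 → e = f (t e) := fun e he => by
    have : e ∈ LinearMap.range f := hexact ▸ (by simpa using he)
    obtain ⟨c, rfl⟩ := this
    rw [tf]
  have canc : ∀ {s s' : M →ₗ[k] C}, s ∘ₗ g = s' ∘ₗ g → s = s' := fun {s s'} hs => by
    ext m
    obtain ⟨e, rfl⟩ := surjg m
    exact LinearMap.congr_fun hs e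
  obtain ⟨σ₀, hσ₀⟩ := g.exists_rightInverse_of_surjective (LinearMap.range_eq_top.2 surjg)
  have gσ : ∀ m, g (σ₀ m) = m := fun m => LinearMap.congr_fun hσ₀ m
  have hσ : f ∘ₗ t + (σ₀ - f ∘ₗ t ∘ₗ σ₀) ∘ₗ g = LinearMap.id := by
    ext e
    have := ker (e - σ₀ (g e)) (by rw [map_sub, gσ, sub_self])
    rw [map_sub, map_sub] at this
    simp only [LinearMap.add_apply, LinearMap.comp_apply, LinearMap.sub_apply, LinearMap.id_apply]
    rw [← sub_eq_zero] at this ⊢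
    rw [← neg_eq_zero, ← this]
    abel
  have gg : ∀ e, TensorProduct.map g g (ΔE e) = ΔM (g e) := LinearMap.congr_fun homg.1
  have gt : ∀ e, TensorProduct.map g t (ΔE e) = ρ (g e) := fun e => (LinearMap.congr_fun hρ e).symm
  have tt : ∀ e, TensorProduct.map t t (ΔE e) = h (g e) + ΔC (t e) := fun e => by
    have := LinearMap.congr_fun hh e
    simp only [LinearMap.comp_apply, LinearMap.sub_apply] at this
    rw [this]; abel
  have tg : ∀ e, TensorProduct.map t g (ΔE e) = -TensorProduct.comm k M C (ρ (g e)) := fun e => by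
    rw [aux_anti ΔE hE.1, gt]
  have fγ : ∀ γ : E →ₗ[k] E, InKerK ΔE RE f g t γ → ∀ c, γ (f c) = f c := fun γ hγ c => by
    have h1 : g (γ (f c)) = 0 := (LinearMap.congr_fun hγ.2.2.2 (f c)).trans (gf c)
    have h2 : t (γ (f c)) = c := LinearMap.congr_fun hγ.2.2.1 c
    rw [ker _ h1, h2]
  -- the shape of an element of the kernel
  have shape : ∀ γ : E →ₗ[k] E, g ∘ₗ γ = g → ∀ s : M →ₗ[k] C,
      s ∘ₗ g = t ∘ₗ γ - t → ∀ e, γ e = e + f (s (g e)) := fun γ hγ s hs e => by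
    have h1 : g (γ e - e) = 0 := by
      rw [map_sub, sub_eq_zero]; exact LinearMap.congr_fun hγ e
    have h2 : s (g e) = t (γ e) - t e := LinearMap.congr_fun hs e
    rw [h2, ← map_sub, ← ker _ h1]; abel
  have wd : ∀ γ : E →ₗ[k] E, InKerK ΔE RE f g t γ →
      ∀ e e' : E, g e = g e' → t (γ e) - t e = t (γ e') - t e' := fun γ hγ e e' he => by
    have h1 := ker (e - e') (by rw [map_sub, he, sub_self])
    have h2 := fγ γ hγ (t (e - e'))
    rw [← h1] at h2
    have h3 := congrArg t h2
    simp only [map_sub] at h3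
    rw [sub_eq_sub_iff_sub_eq_sub, h3]
  -- expansions
  have exgt : ∀ (γ : E →ₗ[k] E) (s : M →ₗ[k] C), g ∘ₗ γ = g → t ∘ₗ γ = t + s ∘ₗ g → ∀ e,
      TensorProduct.map g t (TensorProduct.map γ γ (ΔE e)) =
        ρ (g e) + lTensor M s (ΔM (g e)) := fun γ s h1 h2 e => by
    rw [← aux_mapmap, h1, h2, TensorProduct.map_add_right, LinearMap.add_apply, gt, ← gg,
      LinearMap.lTensor, ← aux_mapmap, LinearMap.id_comp]
  have extt : ∀ (γ : E →ₗ[k] E) (s : M →ₗ[k] C), t ∘ₗ γ = t + s ∘ₗ g → ∀ e,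
      TensorProduct.map t t (TensorProduct.map γ γ (ΔE e)) =
        h (g e) + ΔC (t e) + (TensorProduct.map s (LinearMap.id : C →ₗ[k] C) (ρ (g e))
          - TensorProduct.comm k C C
              (TensorProduct.map s (LinearMap.id : C →ₗ[k] C) (ρ (g e))))
          + TensorProduct.map s s (ΔM (g e)) := fun γ s h2 e => by
    have e1 : TensorProduct.map (s ∘ₗ g) t (ΔE e)
        = TensorProduct.map s (LinearMap.id : C →ₗ[k] C) (ρ (g e)) := by
      rw [← gt, ← aux_mapmap, LinearMap.id_comp]
    have e2 := aux_anti ΔE hE.1 t (s ∘ₗ g) e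
    rw [e1] at e2
    rw [← aux_mapmap, h2, TensorProduct.map_add_right, TensorProduct.map_add_left,
      TensorProduct.map_add_left, LinearMap.add_apply, LinearMap.add_apply, LinearMap.add_apply,
      tt, e1, e2, aux_mapmap, gg]
    abel
  refine ⟨wd, ?_, ?_, ?_, ?_, ?_⟩
  · intro γ hγ
    refine ⟨(t ∘ₗ γ - t) ∘ₗ σ₀, ?_, ?_⟩
    · ext e
      exact wd γ hγ _ _ (gσ _)
    · intro s hs
      rw [← hs, LinearMap.comp_assoc, hσ₀, LinearMap.comp_id]
  · intro γ hγ s hs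
    have sh := shape γ hγ.2.2.2 s hs
    have tγ : t ∘ₗ γ = t + s ∘ₗ g := by rw [hs]; abel
    have hom : ∀ e, TensorProduct.map γ γ (ΔE e) = ΔE (γ e) := LinearMap.congr_fun hγ.1.1
    have gγ : ∀ e, g (γ e) = g e := LinearMap.congr_fun hγ.2.2.2
    have tγe : ∀ e, t (γ e) = t e + s (g e) := LinearMap.congr_fun tγ
    refine ⟨?_, ?_, ?_⟩
    · ext m
      obtain ⟨e, rfl⟩ := surjg m
      have := extt γ s tγ e
      rw [hom, tt, gγ, tγe, map_add] at this
      simp only [LinearMap.comp_apply, LinearMap.sub_apply, LinearEquiv.coe_coe]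
      rw [← sub_eq_zero] at this ⊢
      rw [← neg_eq_zero, ← this]
      abel
    · ext m
      obtain ⟨e, rfl⟩ := surjg m
      have := exgt γ s hγ.2.2.2 tγ e
      rw [hom, gt, gγ] at this
      exact left_eq_add.1 this
    · ext m
      obtain ⟨e, rfl⟩ := surjg m
      have h1 : RE (γ e) = γ (RE e) := LinearMap.congr_fun hγ.1.2 e
      have h2 : RM (g e) = g (RE e) := LinearMap.congr_fun homg.2 e
      have h3 : RE (f (s (g e))) = f (RC (s (g e))) := LinearMap.congr_fun homf.2 _
      rw [sh, sh, map_add, h3] at h1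
      rw [LinearMap.comp_apply, LinearMap.comp_apply, h2]
      exact (injf (add_left_cancel h1)).symm
  · intro γ₁ γ₂ h₁ h₂ s₁ s₂ s₁₂ hs₁ hs₂ hs
    apply canc
    ext e
    have a := LinearMap.congr_fun hs e
    simp only [LinearMap.comp_apply, LinearMap.sub_apply] at a
    rw [shape γ₂ h₂.2.2.2 s₂ hs₂ e, map_add, fγ γ₁ h₁, shape γ₁ h₁.2.2.2 s₁ hs₁ e] at a
    simp only [map_add, tf] at a
    simp only [LinearMap.comp_apply, LinearMap.add_apply]
    rw [a]; abel
  · intro γ₁ γ₂ h₁ h₂ s hs₁ hs₂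
    ext e
    rw [shape γ₁ h₁.2.2.2 s hs₁ e, shape γ₂ h₂.2.2.2 s hs₂ e]
  · intro s hs
    obtain ⟨c1, c2, c3⟩ := hs
    have gγ : g ∘ₗ (LinearMap.id + f ∘ₗ s ∘ₗ g) = g := by
      ext e; simp [gf]
    have tγ : t ∘ₗ (LinearMap.id + f ∘ₗ s ∘ₗ g) = t + s ∘ₗ g := by
      ext e; simp [tf]
    have γe : ∀ e, (LinearMap.id + f ∘ₗ s ∘ₗ g : E →ₗ[k] E) e = e + f (s (g e)) := fun e => rfl
    generalize hγ : (LinearMap.id + f ∘ₗ s ∘ₗ g) = γ at gγ tγ γe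
    have gγe : ∀ e, g (γ e) = g e := LinearMap.congr_fun gγ
    have tγe : ∀ e, t (γ e) = t e + s (g e) := LinearMap.congr_fun tγ
    have kgt : ∀ e, TensorProduct.map g t (TensorProduct.map γ γ (ΔE e))
        = TensorProduct.map g t (ΔE (γ e)) := fun e => by
      have c2e : lTensor M s (ΔM (g e)) = 0 := LinearMap.congr_fun c2 (g e)
      rw [exgt γ s gγ tγ, gt, gγe, c2e, add_zero]
    refine ⟨γ, ⟨⟨?_, ?_⟩, ⟨?_, ?_⟩, ?_, gγ⟩, ?_⟩
    · refine LinearMap.ext fun e => ?_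
      rw [LinearMap.comp_apply, LinearMap.comp_apply]
      refine aux_joint f g t _ hσ _ _ ?_ (kgt e) ?_ ?_
      · have c1e := LinearMap.congr_fun c1 (g e)
        simp only [LinearMap.comp_apply, LinearMap.sub_apply, LinearEquiv.coe_coe] at c1e
        rw [extt γ s tγ, tt, gγe, tγe, map_add, c1e]
        abel
      · have := kgt e
        rw [← aux_mapmap] at this ⊢
        rw [aux_anti ΔE hE.1, this, aux_anti ΔE hE.1 t g]
      · rw [← aux_mapmap, gγ, gg, gg, gγe]
    · ext e
      have h2 : RM (g e) = g (RE e) := LinearMap.congr_fun homg.2 e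
      have h3 : RE (f (s (g e))) = f (RC (s (g e))) := LinearMap.congr_fun homf.2 _
      have h4 : s (RM (g e)) = RC (s (g e)) := LinearMap.congr_fun c3 (g e)
      rw [LinearMap.comp_apply, LinearMap.comp_apply, γe, γe, map_add, h3, ← h4, h2]
    · intro a b hab
      have h1 : g a = g b := by rw [← gγe a, hab, gγe]
      rw [γe, γe, h1] at hab
      exact add_right_cancel hab
    · intro b
      refine ⟨b - f (s (g b)), ?_⟩
      rw [γe, map_sub, gf, sub_zero, sub_add_cancel]
    · ext c
      simp [tγe, tf, gf]
    · rw [tγ]; abel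

end
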